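/- Let σ > 0 and T > 0. Assume each X_i is divergence-free and δ-homogeneous of degree one. Let b : [0,T]×ℝ^d → ℝ^m be bounded and continuous with b(t,·) ∈ C¹(ℝ^d, ℝ^m) for each t. Let ρ : [0,T]×ℝ^d → ℝ be continuous and bounded, C¹ in t and C² in x on (0,T)×ℝ^d with these derivatives continuous, satisfying the Fokker–Planck equation ∂_t ρ = σ Δ_G ρ + div_G(b(t,·) ρ(t,·)) pointwise on (0,T)×ℝ^d, with ρ(0,·) = ρ₀ ∈ L²(ℝ^d) and with sup over t ∈ [0,T] of ∫_{ℝ^d} ρ(t,x)² dx finite. Then there is a constant K, depending only on σ, T and the supremum norm of b, such that for every t ∈ [0,T], ∫_{ℝ^d} ρ(t,x)² dx ≤ K ∫_{ℝ^d} ρ₀(x)² dx, and moreover ∫_0^T ∫_{ℝ^d} |∇_G ρ(t,x)|² dx dt ≤ K ∫_{ℝ^d} ρ₀(x)² dx. -/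

import Mathlib

open MeasureTheory Set

noncomputable section

/-- Derivative of `f : ℝ^d → ℝ` along the vector field `X` (horizontal derivative `X f`). -/
def vderiv {d : ℕ} (X : (Fin d → ℝ) → (Fin d → ℝ)) (f : (Fin d → ℝ) → ℝ)
    (x : Fin d → ℝ) : ℝ := fderiv ℝ f x (X x)

/-- Squared Euclidean norm of the horizontal gradient `∇_G f`. -/
def hgradSq {d m : ℕ} (X : Fin m → (Fin d → ℝ) → (Fin d → ℝ)) (f : (Fin d → ℝ) → ℝ)
    (x : Fin d → ℝ) : ℝ := ∑ i, (vderiv (X i) f x) ^ 2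

/-- Horizontal Laplacian `Δ_G f = Σ X_i (X_i f)`. -/
def hLap {d m : ℕ} (X : Fin m → (Fin d → ℝ) → (Fin d → ℝ)) (f : (Fin d → ℝ) → ℝ)
    (x : Fin d → ℝ) : ℝ := ∑ i, vderiv (X i) (vderiv (X i) f) x

/-- Horizontal divergence `div_G B = Σ X_i B_i`. -/
def hdiv {d m : ℕ} (X : Fin m → (Fin d → ℝ) → (Fin d → ℝ)) (B : (Fin d → ℝ) → Fin m → ℝ)
    (x : Fin d → ℝ) : ℝ := ∑ i, vderiv (X i) (fun y => B y i) x

/-- Euclidean divergence `Σ_j ∂_{x_j} X^j` of a vector field on `ℝ^d`. -/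
def ediv {d : ℕ} (X : (Fin d → ℝ) → (Fin d → ℝ)) (x : Fin d → ℝ) : ℝ :=
  ∑ j, fderiv ℝ X x (Pi.single j 1) j

/-- Anisotropic dilations `δ_λ x = (λ^{w_1} x_1, …, λ^{w_d} x_d)`. -/
def dil {d : ℕ} (w : Fin d → ℕ) (l : ℝ) (x : Fin d → ℝ) : Fin d → ℝ :=
  fun i => l ^ (w i) * x i

/-- A vector field is `δ`-homogeneous of degree one. -/
def homogOne {d : ℕ} (w : Fin d → ℕ) (X : (Fin d → ℝ) → (Fin d → ℝ)) : Prop :=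
  ∀ l : ℝ, 0 < l → ∀ x, fderiv ℝ (dil w l) x (X x) = l • X (dil w l x)


lemma cd_vderiv {d : ℕ} {n : ℕ} {X : (Fin d → ℝ) → (Fin d → ℝ)} (hX : ContDiff ℝ (⊤ : ℕ∞) X)
    {f : (Fin d → ℝ) → ℝ} (hf : ContDiff ℝ (n + 1) f) : ContDiff ℝ n (vderiv X f) := by
  unfold vderiv
  have h1 : ContDiff ℝ n (fderiv ℝ f) := hf.fderiv_right le_rfl
  exact h1.clm_apply (hX.of_le (by exact_mod_cast le_top))

lemma vderiv_zero_off {d : ℕ} {X : (Fin d → ℝ) → (Fin d → ℝ)}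
    {f : (Fin d → ℝ) → ℝ} {k : Set (Fin d → ℝ)} (hk : IsClosed k) (hf : ∀ x ∉ k, f x = 0) :
    ∀ x ∉ k, vderiv X f x = 0 := by
  intro x hx
  have : f =ᶠ[nhds x] fun _ => 0 := by
    filter_upwards [hk.isOpen_compl.mem_nhds hx] with y hy using hf y hy
  unfold vderiv
  rw [this.fderiv_eq]; simp

lemma integral_vderiv {d : ℕ} {X : (Fin d → ℝ) → (Fin d → ℝ)} (hX : ContDiff ℝ (⊤ : ℕ∞) X)
    (hdiv : ∀ x, ediv X x = 0) {f : (Fin d → ℝ) → ℝ} (hf : ContDiff ℝ 1 f)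
    {k : Set (Fin d → ℝ)} (hk : IsCompact k) (hfk : ∀ x ∉ k, f x = 0) :
    ∫ x, vderiv X f x = 0 := by
  have hX1 : ContDiff ℝ 1 X := hX.of_le (by exact_mod_cast le_top)
  have hXj : ∀ j, ContDiff ℝ 1 (fun x => X x j) := fun j => contDiff_pi.1 hX1 j
  have hcf' : Continuous (fderiv ℝ f) := hf.continuous_fderiv (by norm_num)
  have hf'0 : ∀ x ∉ k, fderiv ℝ f x = 0 := by
    intro x hx
    have : f =ᶠ[nhds x] fun _ => 0 := by
      filter_upwards [hk.isClosed.isOpen_compl.mem_nhds hx] with y hy using hfk y hy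
    rw [this.fderiv_eq]; simp
  have hcX' : ∀ j, Continuous (fderiv ℝ (fun x => X x j)) :=
    fun j => (hXj j).continuous_fderiv (by norm_num)
  have i1 : ∀ j : Fin d, Integrable (fun x => fderiv ℝ (fun x => X x j) x (Pi.single j 1) * f x) := by
    intro j
    apply Continuous.integrable_of_hasCompactSupport
    · exact ((hcX' j).clm_apply continuous_const).mul hf.continuous
    · exact HasCompactSupport.intro hk (fun x hx => by simp [hfk x hx])
  have i2 : ∀ j : Fin d, Integrable (fun x => X x j * fderiv ℝ f x (Pi.single j 1)) := by
    intro j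
    apply Continuous.integrable_of_hasCompactSupport
    · exact (hXj j).continuous.mul (hcf'.clm_apply continuous_const)
    · exact HasCompactSupport.intro hk (fun x hx => by simp [hf'0 x hx])
  have i3 : ∀ j : Fin d, Integrable (fun x => X x j * f x) := by
    intro j
    apply Continuous.integrable_of_hasCompactSupport
    · exact (hXj j).continuous.mul hf.continuous
    · exact HasCompactSupport.intro hk (fun x hx => by simp [hfk x hx])
  have key : ∀ j : Fin d, ∫ x, X x j * fderiv ℝ f x (Pi.single j 1)
      = - ∫ x, fderiv ℝ (fun x => X x j) x (Pi.single j 1) * f x := fun j =>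
    integral_mul_fderiv_eq_neg_fderiv_mul_of_integrable (i1 j) (i2 j) (i3 j)
      (fun x _ => (hXj j).differentiable (by norm_num) x)
      (fun x _ => hf.differentiable (by norm_num) x)
  have e1 : ∀ x, vderiv X f x = ∑ j, X x j * fderiv ℝ f x (Pi.single j 1) := by
    intro x
    unfold vderiv
    conv_lhs => rw [pi_eq_sum_univ' (X x)]
    simp [map_sum]
  have e2 : ∀ x, ∑ j, fderiv ℝ (fun x => X x j) x (Pi.single j 1) * f x = 0 := by
    intro x
    rw [← Finset.sum_mul]
    have := hdiv x
    unfold ediv at this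
    have h3 : ∀ j, fderiv ℝ (fun x => X x j) x (Pi.single j 1) = fderiv ℝ X x (Pi.single j 1) j := by
      intro j
      have hh := (hX1.differentiable (by norm_num) x).hasFDerivAt
      have := (hasFDerivAt_pi'.1 hh j).fderiv
      rw [this]; rfl
    simp only [h3, this, zero_mul]
  calc ∫ x, vderiv X f x = ∫ x, ∑ j, X x j * fderiv ℝ f x (Pi.single j 1) := by simp only [e1]
    _ = ∑ j, ∫ x, X x j * fderiv ℝ f x (Pi.single j 1) := integral_finsetSum _ (fun j _ => i2 j)
    _ = - ∑ j, ∫ x, fderiv ℝ (fun x => X x j) x (Pi.single j 1) * f x := by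
        simp only [key, Finset.sum_neg_distrib]
    _ = - ∫ x, ∑ j, fderiv ℝ (fun x => X x j) x (Pi.single j 1) * f x := by
        rw [integral_finsetSum _ (fun j _ => i1 j)]
    _ = 0 := by simp [e2]

lemma vderiv_mul {d : ℕ} {X : (Fin d → ℝ) → (Fin d → ℝ)} {f g : (Fin d → ℝ) → ℝ}
    {x : Fin d → ℝ} (hf : DifferentiableAt ℝ f x) (hg : DifferentiableAt ℝ g x) :
    vderiv X (fun y => f y * g y) x = f x * vderiv X g x + vderiv X f x * g x := by
  unfold vderiv
  rw [fderiv_fun_mul hf hg]; simp; ring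

lemma vderiv_add {d : ℕ} {X : (Fin d → ℝ) → (Fin d → ℝ)} {f g : (Fin d → ℝ) → ℝ}
    {x : Fin d → ℝ} (hf : DifferentiableAt ℝ f x) (hg : DifferentiableAt ℝ g x) :
    vderiv X (fun y => f y + g y) x = vderiv X f x + vderiv X g x := by
  unfold vderiv
  rw [fderiv_fun_add hf hg]; simp

lemma vderiv_const_mul {d : ℕ} {X : (Fin d → ℝ) → (Fin d → ℝ)} {f : (Fin d → ℝ) → ℝ}
    {x : Fin d → ℝ} (c : ℝ) (hf : DifferentiableAt ℝ f x) :
    vderiv X (fun y => c * f y) x = c * vderiv X f x := by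
  unfold vderiv
  rw [fderiv_const_mul hf]; simp

lemma young_pt {σ Mb p q r β φ : ℝ} (hσ : 0 < σ) (hβ : |β| ≤ Mb) :
    -(4 * φ * r * p + 2 * φ ^ 2 * q) * (σ * q + β * r)
      ≤ -σ * (φ ^ 2 * q ^ 2) + (2 / σ + 2) * Mb ^ 2 * (φ ^ 2 * r ^ 2) + (8 * σ + 2) * (r ^ 2 * p ^ 2) := by
  have h1 : β ^ 2 ≤ Mb ^ 2 := sq_le_sq' (by linarith [neg_abs_le β]) ((le_abs_self β).trans hβ)
  have h2 : (2 / σ + 2) * β ^ 2 * (φ ^ 2 * r ^ 2) ≤ (2 / σ + 2) * Mb ^ 2 * (φ ^ 2 * r ^ 2) := by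
    gcongr
  have h3 : -σ * (φ ^ 2 * q ^ 2) + (2 / σ + 2) * β ^ 2 * (φ ^ 2 * r ^ 2) + (8 * σ + 2) * (r ^ 2 * p ^ 2)
     - (-(4 * φ * r * p + 2 * φ ^ 2 * q) * (σ * q + β * r))
     = (σ / 2) * (φ * q + 4 * r * p) ^ 2 + (σ / 2) * (φ * q + 2 / σ * φ * r * β) ^ 2
       + 2 * (φ * r * β + r * p) ^ 2 := by
    field_simp; ring
  have : 0 ≤ (σ / 2) * (φ * q + 4 * r * p) ^ 2 + (σ / 2) * (φ * q + 2 / σ * φ * r * β) ^ 2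
       + 2 * (φ * r * β + r * p) ^ 2 := by positivity
  linarith

lemma deriv_energy_le {d m : ℕ} 
    (X : Fin m → (Fin d → ℝ) → (Fin d → ℝ)) (hXsm : ∀ i, ContDiff ℝ (⊤ : ℕ∞) (X i))
    (hXdivfree : ∀ i x, ediv (X i) x = 0) {σ Mb C : ℝ} (hσ : 0 < σ)
    {r φ : (Fin d → ℝ) → ℝ} {β : (Fin d → ℝ) → Fin m → ℝ}
    (hr : ContDiff ℝ 2 r) (hβ : ∀ i, ContDiff ℝ 1 (fun y => β y i)) (hb : ∀ x i, |β x i| ≤ Mb)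
    (hφ : ContDiff ℝ 2 φ) {k : Set (Fin d → ℝ)} (hk : IsCompact k) (hφk : ∀ x ∉ k, φ x = 0)
    (hC : ∀ i x, (vderiv (X i) φ x) ^ 2 ≤ C) (hri : Integrable (fun x => r x ^ 2))
    {rt : (Fin d → ℝ) → ℝ} (hrt : ∀ x, rt x = σ * hLap X r x + hdiv X (fun y i => β y i * r y) x)
    (hi : Integrable (fun x => φ x ^ 2 * (2 * r x * rt x))) :
    ∫ x, φ x ^ 2 * (2 * r x * rt x) ≤ -σ * (∫ x, φ x ^ 2 * hgradSq X r x)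
      + (2 / σ + 2) * Mb ^ 2 * m * (∫ x, φ x ^ 2 * r x ^ 2)
      + (8 * σ + 2) * (m * C) * ∫ x, r x ^ 2 := by
  set G : Fin m → (Fin d → ℝ) → ℝ := fun i y =>
    (2 * (φ y * φ y * r y)) * (σ * vderiv (X i) r y + β y i * r y) with hG
  have hr1 : ContDiff ℝ 1 r := hr.of_le (by norm_num)
  have hφ1 : ContDiff ℝ 1 φ := hφ.of_le (by norm_num)
  have hv1 : ∀ i, ContDiff ℝ 1 (vderiv (X i) r) := fun i => by
    have := cd_vderiv (n := 1) (hXsm i) (f := r) (by norm_num; exact hr)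
    simpa using this
  have hvφ : ∀ i, ContDiff ℝ 1 (vderiv (X i) φ) := fun i => by
    have := cd_vderiv (n := 1) (hXsm i) (f := φ) (by norm_num; exact hφ)
    simpa using this
  have hG1 : ∀ i, ContDiff ℝ 1 (G i) := fun i =>
    (contDiff_const.mul ((hφ1.mul hφ1).mul hr1)).mul ((contDiff_const.mul (hv1 i)).add ((hβ i).mul hr1))
  have hGk : ∀ i, ∀ x ∉ k, G i x = 0 := fun i x hx => by simp [hG, hφk x hx]
  have hGint : ∀ i, ∫ x, vderiv (X i) (G i) x = 0 := fun i =>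
    integral_vderiv (hXsm i) (hXdivfree i) (hG1 i) hk (hGk i)
  have hGi : ∀ i, Integrable (fun x => vderiv (X i) (G i) x) := fun i => by
    apply Continuous.integrable_of_hasCompactSupport
    · have := cd_vderiv (n := 0) (hXsm i) (f := G i) (by norm_num; exact hG1 i)
      exact this.continuous
    · exact HasCompactSupport.intro hk (vderiv_zero_off hk.isClosed (hGk i))
  have hGv : ∀ i x, vderiv (X i) (G i) x =
      2 * φ x ^ 2 * r x * (σ * vderiv (X i) (vderiv (X i) r) x + vderiv (X i) (fun y => β y i * r y) x)
      + (4 * φ x * r x * vderiv (X i) φ x + 2 * φ x ^ 2 * vderiv (X i) r x) *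
        (σ * vderiv (X i) r x + β x i * r x) := by
    intro i x
    have dr := hr1.differentiable (by norm_num) x
    have dφ := hφ1.differentiable (by norm_num) x
    have dv := (hv1 i).differentiable (by norm_num) x
    have dβ := (hβ i).differentiable (by norm_num) x
    rw [hG]
    simp only
    have dφφ : DifferentiableAt ℝ (fun y => φ y * φ y) x := dφ.mul dφ
    have dφφr : DifferentiableAt ℝ (fun y => φ y * φ y * r y) x := dφφ.mul dr
    have dβr : DifferentiableAt ℝ (fun y => β y i * r y) x := dβ.mul dr
    have dsum : DifferentiableAt ℝ (fun y => σ * vderiv (X i) r y + β y i * r y) x :=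
      (dv.const_mul σ).add dβr
    rw [vderiv_mul (dφφr.const_mul 2) dsum,
      vderiv_add (dv.const_mul σ) dβr, vderiv_const_mul _ dv,
      vderiv_const_mul _ dφφr, vderiv_mul dφφ dr, vderiv_mul dφ dφ]
    ring
  have hpt : ∀ x, φ x ^ 2 * (2 * r x * rt x) ≤ (∑ i, vderiv (X i) (G i) x)
      + (-σ * (φ x ^ 2 * hgradSq X r x) + (2 / σ + 2) * Mb ^ 2 * m * (φ x ^ 2 * r x ^ 2)
      + (8 * σ + 2) * (m * C) * r x ^ 2) := by
    intro x
    have h1 : φ x ^ 2 * (2 * r x * rt x) = ∑ i, (2 * φ x ^ 2 * r x *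
        (σ * vderiv (X i) (vderiv (X i) r) x + vderiv (X i) (fun y => β y i * r y) x)) := by
      rw [hrt, hLap, hdiv, ← Finset.mul_sum, Finset.sum_add_distrib, ← Finset.mul_sum]; ring
    have h2 : (-σ * (φ x ^ 2 * hgradSq X r x) + (2 / σ + 2) * Mb ^ 2 * m * (φ x ^ 2 * r x ^ 2)
      + (8 * σ + 2) * (m * C) * r x ^ 2) = ∑ i : Fin m, (-σ * (φ x ^ 2 * (vderiv (X i) r x) ^ 2) +
        (2 / σ + 2) * Mb ^ 2 * (φ x ^ 2 * r x ^ 2) + (8 * σ + 2) * (r x ^ 2 * C)) := by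
      rw [hgradSq, Finset.sum_add_distrib, Finset.sum_add_distrib, ← Finset.mul_sum, ← Finset.mul_sum]
      simp; ring
    rw [h1, h2, ← Finset.sum_add_distrib]
    apply Finset.sum_le_sum
    intro i _
    have h3 := young_pt (p := vderiv (X i) φ x) (q := vderiv (X i) r x) (r := r x) (φ := φ x) hσ (hb x i)
    have h4 : (8 * σ + 2) * (r x ^ 2 * vderiv (X i) φ x ^ 2) ≤ (8 * σ + 2) * (r x ^ 2 * C) := by
      have := hC i x
      gcongr
    rw [hGv]
    linarith
  have hg : Continuous (hgradSq X r) := by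
    unfold hgradSq
    exact continuous_finsetSum _ (fun i _ => (hv1 i).continuous.pow 2)
  have hi1 : Integrable (fun x => φ x ^ 2 * hgradSq X r x) := by
    apply Continuous.integrable_of_hasCompactSupport
    · exact (hφ.continuous.pow 2).mul hg
    · exact HasCompactSupport.intro hk (fun x hx => by simp [hφk x hx])
  have hi2 : Integrable (fun x => φ x ^ 2 * r x ^ 2) := by
    apply Continuous.integrable_of_hasCompactSupport
    · exact (hφ.continuous.pow 2).mul (hr.continuous.pow 2)
    · exact HasCompactSupport.intro hk (fun x hx => by simp [hφk x hx])
  have hiS : Integrable (fun x => ∑ i, vderiv (X i) (G i) x) := integrable_finsetSum _ (fun i _ => hGi i)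
  have hA : Integrable (fun x => -σ * (φ x ^ 2 * hgradSq X r x)) := hi1.const_mul _
  have hB : Integrable (fun x => (2 / σ + 2) * Mb ^ 2 * m * (φ x ^ 2 * r x ^ 2)) := hi2.const_mul _
  have hD : Integrable (fun x => (8 * σ + 2) * (m * C) * r x ^ 2) := hri.const_mul _
  have hAB : Integrable (fun x => -σ * (φ x ^ 2 * hgradSq X r x)
      + (2 / σ + 2) * Mb ^ 2 * m * (φ x ^ 2 * r x ^ 2)) := hA.add hB
  have hABD : Integrable (fun x => -σ * (φ x ^ 2 * hgradSq X r x)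
      + (2 / σ + 2) * Mb ^ 2 * m * (φ x ^ 2 * r x ^ 2)
      + (8 * σ + 2) * (m * C) * r x ^ 2) := hAB.add hD
  refine (integral_mono hi (hiS.add hABD) hpt).trans (le_of_eq ?_)
  simp only [Pi.add_apply]
  rw [integral_add hiS hABD, integral_finsetSum _ (fun i _ => hGi i), integral_add hAB hD,
    integral_add hA hB, integral_const_mul, integral_const_mul, integral_const_mul]
  simp [hGint]

lemma hasDerivAt_int {d : ℕ} {T : ℝ} {f f' : ℝ → (Fin d → ℝ) → ℝ} {k : Set (Fin d → ℝ)}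
    (hk : IsCompact k) (hf : ∀ t ∈ Ioo 0 T, Continuous (f t))
    (hf' : ContinuousOn (fun p : ℝ × (Fin d → ℝ) => f' p.1 p.2) (Ioo 0 T ×ˢ univ))
    (hd : ∀ t ∈ Ioo 0 T, ∀ x, HasDerivAt (fun s => f s x) (f' t x) t)
    (h0 : ∀ t, ∀ x ∉ k, f t x = 0) (h0' : ∀ t, ∀ x ∉ k, f' t x = 0) {t : ℝ} (ht : t ∈ Ioo 0 T) :
    Integrable (f' t) ∧ HasDerivAt (fun s => ∫ x, f s x) (∫ x, f' t x) t := by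
  obtain ⟨a, b, hab, hn, hs⟩ : ∃ a b, t ∈ Icc a b ∧ Icc a b ∈ nhds t ∧ Icc a b ⊆ Ioo 0 T := by
    refine ⟨t / 2, (t + T) / 2, ?_, Icc_mem_nhds ?_ ?_, ?_⟩
    · constructor <;> linarith [ht.1, ht.2]
    · linarith [ht.1]
    · linarith [ht.2]
    · intro s hs; constructor <;> linarith [ht.1, ht.2, hs.1, hs.2]
  obtain ⟨M, hM⟩ := ((isCompact_Icc (a := a) (b := b)).prod hk).exists_bound_of_continuousOn
    (hf'.mono (prod_mono hs (subset_univ _)))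
  have hc' : Continuous (f' t) := by
    have : ContinuousOn (fun x => f' t x) univ :=
      hf'.comp (f := fun x : Fin d → ℝ => (t, x)) (by fun_prop) (fun x _ => ⟨ht, mem_univ _⟩)
    exact continuousOn_univ.1 this
  refine hasDerivAt_integral_of_dominated_loc_of_deriv_le (bound := k.indicator (fun _ => M)) hn ?_ ?_ ?_ ?_ ?_ ?_
  · filter_upwards [hn] with s hs' using (hf s (hs hs')).aestronglyMeasurable
  · exact (hf t ht).integrable_of_hasCompactSupport (HasCompactSupport.intro hk (h0 t))
  · exact hc'.aestronglyMeasurable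
  · refine Filter.Eventually.of_forall fun x s hs' => ?_
    by_cases hx : x ∈ k
    · simpa [hx] using hM (s, x) ⟨hs', hx⟩
    · simp [hx, h0' s x hx]
  · rw [integrable_indicator_iff hk.measurableSet]
    exact integrableOn_const (hk.measure_lt_top.ne)
  · exact Filter.Eventually.of_forall fun x s hs' => hd s (hs hs') x

lemma ode_bound {T σ A c : ℝ} {E E' D : ℝ → ℝ} (hT : 0 < T) (hσ : 0 < σ) (hA : 0 ≤ A) (hc : 0 ≤ c)
    (hE : ContinuousOn E (Icc 0 T)) (hE0 : ∀ t, 0 ≤ E t) (hD0 : ∀ t, 0 ≤ D t)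
    (hd : ∀ t ∈ Ioo 0 T, HasDerivAt E (E' t) t) (hD : ContinuousOn D (Ioo 0 T))
    (hle : ∀ t ∈ Ioo 0 T, E' t ≤ -σ * D t + A * E t + c) :
    (∀ t ∈ Icc 0 T, E t ≤ Real.exp (A * T) * (E 0 + c * T)) ∧
    ∀ a b, 0 < a → a ≤ b → b < T → ∫ t in a..b, D t ≤
      ((1 + A * T) * (Real.exp (A * T) * (E 0 + c * T)) + c * T) / σ := by
  have h1 : ∀ t ∈ Icc 0 T, E t ≤ Real.exp (A * T) * (E 0 + c * T) := by
    have hder : ∀ t ∈ Ioo 0 T, HasDerivAt (fun t => Real.exp (-A * t) * E t - c * t)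
        (Real.exp (-A * t) * (-A) * E t + Real.exp (-A * t) * E' t - c) t := by
      intro t ht
      have e1 : HasDerivAt (fun t : ℝ => Real.exp (-A * t)) (Real.exp (-A * t) * (-A)) t := by
        have := ((hasDerivAt_id t).const_mul (-A)).exp
        simpa using this
      have e2 : HasDerivAt (fun t : ℝ => c * t) c t := by
        simpa using (hasDerivAt_id t).const_mul c
      exact (e1.mul (hd t ht)).sub e2
    have hanti : AntitoneOn (fun t => Real.exp (-A * t) * E t - c * t) (Icc 0 T) := by
      apply antitoneOn_of_deriv_nonpos (convex_Icc _ _)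
      · exact (ContinuousOn.mul (by fun_prop) hE).sub (by fun_prop)
      · rw [interior_Icc]
        exact fun t ht => (hder t ht).differentiableAt.differentiableWithinAt
      · rw [interior_Icc]
        intro t ht
        rw [(hder t ht).deriv]
        have h2 := hle t ht
        have h3 : Real.exp (-A * t) ≤ 1 := Real.exp_le_one_iff.2 (by nlinarith [ht.1])
        have h4 := Real.exp_pos (-A * t)
        have h5 : E' t - A * E t ≤ c := by nlinarith [hD0 t]
        have h6 : Real.exp (-A * t) * (E' t - A * E t) ≤ Real.exp (-A * t) * c := by gcongr
        nlinarith
    intro t ht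
    have h2 := hanti (left_mem_Icc.2 hT.le) ht ht.1
    simp only [mul_zero, Real.exp_zero, one_mul, sub_zero] at h2
    have h3 : Real.exp (-A * t) * E t ≤ E 0 + c * T := by nlinarith [ht.2]
    have h4 : E t = Real.exp (A * t) * (Real.exp (-A * t) * E t) := by
      rw [← mul_assoc, ← Real.exp_add]; simp
    rw [h4]
    have h5 : 0 ≤ E 0 + c * T := by have := hE0 0; positivity
    have h6 := ht.2
    have h7 : 0 ≤ Real.exp (-A * t) * E t := mul_nonneg (Real.exp_pos _).le (hE0 t)
    gcongr
  refine ⟨h1, ?_⟩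
  intro a b ha hab hb
  set B := Real.exp (A * T) * (E 0 + c * T) with hB
  have hs : Icc a b ⊆ Ioo 0 T := fun s hs => ⟨ha.trans_le hs.1, hs.2.trans_lt hb⟩
  have hs' : Icc a b ⊆ Icc 0 T := hs.trans Ioo_subset_Icc_self
  have hDi : IntervalIntegrable D volume a b := by
    apply ContinuousOn.intervalIntegrable
    rw [uIcc_of_le hab]; exact hD.mono hs
  have h2 := intervalIntegral.sub_le_integral_of_hasDeriv_right_of_le (g := E) (g' := E')
    (φ := fun t => (A * B + c) - σ * D t) hab (hE.mono hs')
    (fun x hx => (hd x (hs (Ioo_subset_Icc_self hx))).hasDerivWithinAt)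
    ((continuousOn_const.sub (continuousOn_const.mul (hD.mono hs))).integrableOn_Icc)
    (fun x hx => by
      have h3 := hle x (hs (Ioo_subset_Icc_self hx))
      have h4 := mul_le_mul_of_nonneg_left (h1 x (hs' (Ioo_subset_Icc_self hx))) hA
      linarith)
  rw [intervalIntegral.integral_sub (by simp) (hDi.const_mul σ), intervalIntegral.integral_const,
    intervalIntegral.integral_const_mul, smul_eq_mul] at h2
  have h3 := h1 a (hs' (left_mem_Icc.2 hab))
  have h4 := hE0 b
  have hB0 : 0 ≤ B := (hE0 a).trans h3
  have h5 : (b - a) * (A * B + c) ≤ T * (A * B + c) := by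
    have : b - a ≤ T := by linarith
    gcongr
  rw [le_div_iff₀ hσ]
  nlinarith

lemma exists_cutoff {d m : ℕ} (w : Fin d → ℕ) (hw : ∀ i, 0 < w i)
    (X : Fin m → (Fin d → ℝ) → (Fin d → ℝ)) (hXsm : ∀ i, ContDiff ℝ (⊤ : ℕ∞) (X i))
    (hXhom : ∀ i, homogOne w (X i)) :
    ∃ (φ : ℕ → (Fin d → ℝ) → ℝ) (k : ℕ → Set (Fin d → ℝ)) (c : ℕ → ℝ),
      (∀ n, ContDiff ℝ 2 (φ n)) ∧ (∀ n, IsCompact (k n)) ∧ (∀ n, ∀ x ∉ k n, φ n x = 0) ∧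
      (∀ n x, 0 ≤ φ n x) ∧ (∀ n x, φ n x ≤ 1) ∧
      (∀ x, Filter.Tendsto (fun n => φ n x) Filter.atTop (nhds 1)) ∧
      (∀ n, 0 ≤ c n) ∧ Filter.Tendsto c Filter.atTop (nhds 0) ∧
      ∀ n i x, (vderiv (X i) (φ n) x) ^ 2 ≤ c n := by
  let χ : ContDiffBump (0 : Fin d → ℝ) := ⟨1, 2, by norm_num, by norm_num⟩
  have hχs : ContDiff ℝ 2 χ := χ.contDiff
  have hχ0 : ∀ x ∉ Metric.closedBall (0 : Fin d → ℝ) 2, χ x = 0 := by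
    intro x hx
    apply χ.zero_of_le_dist
    simp only [Metric.mem_closedBall, not_le] at hx
    exact hx.le
  have hbd : ∀ i, ∃ C, ∀ x, ‖vderiv (X i) χ x‖ ≤ C := by
    intro i
    apply Continuous.bounded_above_of_compact_support
    · have := cd_vderiv (n := 1) (hXsm i) (f := χ) (by norm_num; exact hχs)
      exact this.continuous
    · exact HasCompactSupport.intro (isCompact_closedBall (0 : Fin d → ℝ) 2)
        (vderiv_zero_off Metric.isClosed_closedBall hχ0)
  choose C hC using hbd
  have hl : ∀ n : ℕ, (0:ℝ) < 1 / ((n:ℝ) + 1) := fun n => by positivity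
  have hdil : ∀ l, ContDiff ℝ 2 (dil w l) := by
    intro l
    unfold dil
    fun_prop
  have hlt : Filter.Tendsto (fun n : ℕ => 1 / ((n:ℝ) + 1)) Filter.atTop (nhds 0) :=
    tendsto_one_div_add_atTop_nhds_zero_nat
  refine ⟨fun n x => χ (dil w (1 / ((n:ℝ) + 1)) x),
    fun n => Icc (fun i => -(2 * ((n:ℝ) + 1) ^ w i)) (fun i => 2 * ((n:ℝ) + 1) ^ w i),
    fun n => (1 / ((n:ℝ) + 1)) ^ 2 * ∑ i, C i ^ 2, ?_, ?_, ?_, ?_, ?_, ?_, ?_, ?_, ?_⟩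
  · exact fun n => hχs.comp (hdil _)
  · exact fun n => isCompact_Icc
  · intro n x hx
    apply hχ0
    contrapose! hx
    rw [mem_closedBall_zero_iff] at hx
    have h1 : ∀ i, |x i| ≤ 2 * ((n:ℝ) + 1) ^ w i := by
      intro i
      have h2 := (norm_le_pi_norm _ i).trans hx
      have hp : (0:ℝ) < ((n:ℝ) + 1) ^ w i := by positivity
      simp only [dil, Real.norm_eq_abs, abs_mul, one_div, inv_pow, abs_inv, abs_of_pos hp] at h2
      rwa [inv_mul_le_iff₀ hp, mul_comm] at h2
    exact ⟨fun i => (abs_le.1 (h1 i)).1, fun i => (abs_le.1 (h1 i)).2⟩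
  · exact fun n x => χ.nonneg
  · exact fun n x => χ.le_one
  · intro x
    have h0 : dil w 0 x = 0 := by
      funext i; simp [dil, (hw i).ne']
    have hc : Continuous (fun l => dil w l x) := by unfold dil; fun_prop
    have h1 : Filter.Tendsto (fun n : ℕ => dil w (1 / ((n:ℝ) + 1)) x) Filter.atTop (nhds 0) := by
      have := (hc.tendsto 0).comp hlt
      rw [h0] at this
      exact this
    have h2 := (χ.continuous.tendsto 0).comp h1
    have h3 : χ 0 = 1 := χ.one_of_mem_closedBall (by simp [χ])
    rw [h3] at h2
    exact h2
  · exact fun n => by positivity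
  · have := (hlt.pow 2).mul_const (∑ i, C i ^ 2)
    simpa using this
  · intro n i x
    have h1 : vderiv (X i) (fun x => χ (dil w (1 / ((n:ℝ) + 1)) x)) x
        = (1 / ((n:ℝ) + 1)) * vderiv (X i) χ (dil w (1 / ((n:ℝ) + 1)) x) := by
      unfold vderiv
      have := fderiv_comp x (hχs.differentiable (by norm_num) (dil w (1 / ((n:ℝ) + 1)) x))
        ((hdil (1 / ((n:ℝ) + 1))).differentiable (by norm_num) x)
      change fderiv ℝ (χ ∘ dil w (1 / ((n:ℝ) + 1))) x _ = _
      rw [this, ContinuousLinearMap.comp_apply, hXhom i _ (hl n) x, map_smul, smul_eq_mul]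
    rw [h1, mul_pow]
    refine mul_le_mul_of_nonneg_left ?_ (sq_nonneg _)
    have h2 := hC i (dil w (1 / ((n:ℝ) + 1)) x)
    rw [Real.norm_eq_abs] at h2
    calc _ ≤ C i ^ 2 := sq_le_sq' (by linarith [neg_abs_le (vderiv (X i) χ (dil w (1 / ((n:ℝ) + 1)) x))])
            ((le_abs_self _).trans h2)
      _ ≤ _ := Finset.single_le_sum (f := fun i => C i ^ 2) (fun j _ => sq_nonneg (C j)) (Finset.mem_univ i)

/-- Energy estimates for the Fokker–Planck equation: there is a constant
`K`, depending only on `σ`, `T` and the sup norm bound `Mb` of the drift (and on the fixed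
family of vector fields), such that every bounded classical solution `ρ` with
`ρ(0,·) = ρ₀ ∈ L²` and finite `sup_t ∫ ρ(t)²` satisfies
`∫ ρ(t)² ≤ K ∫ ρ₀²` for all `t ∈ [0,T]` and `∫₀^T ∫ |∇_G ρ|² ≤ K ∫ ρ₀²`. -/
theorem fokkerPlanck_energy_estimates {d m : ℕ} (hd : 0 < d) (hm : 0 < m)
    (w : Fin d → ℕ) (hw : ∀ i, 0 < w i)
    (X : Fin m → (Fin d → ℝ) → (Fin d → ℝ)) (hXsm : ∀ i, ContDiff ℝ (⊤ : ℕ∞) (X i))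
    (hXdivfree : ∀ i x, ediv (X i) x = 0)
    (hXhom : ∀ i, homogOne w (X i))
    (σ T Mb : ℝ) (hσ : 0 < σ) (hT : 0 < T) :
    ∃ K : ℝ, 0 ≤ K ∧
      ∀ (b : ℝ → (Fin d → ℝ) → Fin m → ℝ) (ρ : ℝ → (Fin d → ℝ) → ℝ)
        (ρ₀ : (Fin d → ℝ) → ℝ) (Mρ Msup : ℝ),
        Continuous (fun p : ℝ × (Fin d → ℝ) => b p.1 p.2) →
        (∀ t ∈ Set.Icc (0:ℝ) T, ∀ x i, |b t x i| ≤ Mb) →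
        (∀ t ∈ Set.Icc (0:ℝ) T, ∀ i, ContDiff ℝ 1 (fun y => b t y i)) →
        ContinuousOn (fun p : ℝ × (Fin d → ℝ) => ρ p.1 p.2) (Set.Icc 0 T ×ˢ Set.univ) →
        (∀ t ∈ Set.Icc (0:ℝ) T, ∀ x, |ρ t x| ≤ Mρ) →
        (∀ (x : Fin d → ℝ), ∀ t ∈ Set.Ioo (0:ℝ) T, DifferentiableAt ℝ (fun s => ρ s x) t) →
        (∀ t ∈ Set.Ioo (0:ℝ) T, ContDiff ℝ 2 (ρ t)) →
        ContinuousOn (fun p : ℝ × (Fin d → ℝ) => deriv (fun s => ρ s p.2) p.1)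
          (Set.Ioo 0 T ×ˢ Set.univ) →
        (∀ i, ContinuousOn (fun p : ℝ × (Fin d → ℝ) => vderiv (X i) (ρ p.1) p.2)
          (Set.Ioo 0 T ×ˢ Set.univ)) →
        (∀ i i', ContinuousOn
          (fun p : ℝ × (Fin d → ℝ) => vderiv (X i) (vderiv (X i') (ρ p.1)) p.2)
          (Set.Ioo 0 T ×ˢ Set.univ)) →
        (∀ t ∈ Set.Ioo (0:ℝ) T, ∀ x,
          deriv (fun s => ρ s x) t
            = σ * hLap X (ρ t) x + hdiv X (fun y i => b t y i * ρ t y) x) →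
        (∀ x, ρ 0 x = ρ₀ x) →
        MeasureTheory.Integrable (fun x : Fin d → ℝ => ρ₀ x ^ 2) →
        (∀ t ∈ Set.Icc (0:ℝ) T, MeasureTheory.Integrable (fun x : Fin d → ℝ => ρ t x ^ 2)) →
        (∀ t ∈ Set.Icc (0:ℝ) T, (∫ x : Fin d → ℝ, ρ t x ^ 2) ≤ Msup) →
        (∀ t ∈ Set.Icc (0:ℝ) T,
            (∫ x : Fin d → ℝ, ρ t x ^ 2) ≤ K * ∫ x : Fin d → ℝ, ρ₀ x ^ 2) ∧
          (∫ t in Set.Ioc (0:ℝ) T, ∫ x : Fin d → ℝ, hgradSq X (ρ t) x)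
            ≤ K * ∫ x : Fin d → ℝ, ρ₀ x ^ 2 := by
  set A : ℝ := (2 / σ + 2) * Mb ^ 2 * m with hAdef
  have hA : 0 ≤ A := by positivity
  refine ⟨Real.exp (A * T) + (1 + A * T) * Real.exp (A * T) / σ, by positivity, ?_⟩
  intro b ρ ρ₀ Mρ Msup hbc hbM hb1 hρc hρM hρt hρ2 hρt' hv hvv hpde hini hρ0 hρi hρs
  obtain ⟨φ, k, c, hφ, hk, hφk, hφ0, hφ1, hφt, hc0, hct, hφv⟩ := exists_cutoff w hw X hXsm hXhom
  set I : ℝ := ∫ x : Fin d → ℝ, ρ₀ x ^ 2 with hI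
  have hI0 : 0 ≤ I := integral_nonneg fun x => sq_nonneg _
  have hM0 : 0 ≤ Msup := (integral_nonneg fun x => sq_nonneg _).trans (hρs 0 ⟨le_rfl, hT.le⟩)
  let E : ℕ → ℝ → ℝ := fun n t => ∫ x, φ n x ^ 2 * ρ t x ^ 2
  let D : ℕ → ℝ → ℝ := fun n t => ∫ x, φ n x ^ 2 * hgradSq X (ρ t) x
  let ε : ℕ → ℝ := fun n => (8 * σ + 2) * (m * c n) * Msup
  have hgc : ContinuousOn (fun p : ℝ × (Fin d → ℝ) => hgradSq X (ρ p.1) p.2) (Ioo 0 T ×ˢ univ) := by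
    unfold hgradSq
    exact continuousOn_finsetSum _ (fun i _ => (hv i).pow 2)
  have hg0 : ∀ t x, 0 ≤ hgradSq X (ρ t) x := fun t x => Finset.sum_nonneg fun i _ => sq_nonneg _
  have hgx : ∀ t ∈ Ioo 0 T, Continuous (hgradSq X (ρ t)) := by
    intro t ht
    have : ContinuousOn (fun x => hgradSq X (ρ t) x) univ :=
      hgc.comp (f := fun x : Fin d → ℝ => (t, x)) (by fun_prop) (fun x _ => ⟨ht, mem_univ _⟩)
    exact continuousOn_univ.1 this
  have hρx : ∀ t ∈ Icc 0 T, Continuous (ρ t) := by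
    intro t ht
    have : ContinuousOn (fun x => ρ t x) univ :=
      hρc.comp (f := fun x : Fin d → ℝ => (t, x)) (by fun_prop) (fun x _ => ⟨ht, mem_univ _⟩)
    exact continuousOn_univ.1 this
  have hEc : ∀ n, ContinuousOn (E n) (Icc 0 T) := by
    intro n
    refine continuousOn_integral_of_compact_support (hk n) ?_ ?_
    · exact (((hφ n).continuous.comp continuous_snd).pow 2).continuousOn.mul (hρc.pow 2)
    · intro t x _ hx; simp [hφk n x hx]
  have hDc : ∀ n, ContinuousOn (D n) (Ioo 0 T) := by
    intro n
    refine continuousOn_integral_of_compact_support (hk n) ?_ ?_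
    · exact (((hφ n).continuous.comp continuous_snd).pow 2).continuousOn.mul hgc
    · intro t x _ hx; simp [hφk n x hx]
  have hE0 : ∀ n t, 0 ≤ E n t := fun n t => integral_nonneg fun x => by positivity
  have hD0 : ∀ n t, 0 ≤ D n t := fun n t => integral_nonneg fun x => mul_nonneg (sq_nonneg _) (hg0 t x)
  have hε0 : ∀ n, 0 ≤ ε n := fun n => by have := hc0 n; positivity
  have hεt : Filter.Tendsto ε Filter.atTop (nhds 0) := by
    have := ((hct.const_mul (m:ℝ)).const_mul (8 * σ + 2)).mul_const Msup
    simpa [ε] using this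
  have hder : ∀ n, ∀ t ∈ Ioo 0 T,
      Integrable (fun x => φ n x ^ 2 * (2 * ρ t x * deriv (fun s => ρ s x) t)) ∧
      HasDerivAt (E n) (∫ x, φ n x ^ 2 * (2 * ρ t x * deriv (fun s => ρ s x) t)) t := by
    intro n t ht
    refine hasDerivAt_int (T := T) (f := fun t x => φ n x ^ 2 * ρ t x ^ 2)
      (f' := fun t x => φ n x ^ 2 * (2 * ρ t x * deriv (fun s => ρ s x) t)) (hk n) ?_ ?_ ?_ ?_ ?_ ht
    · exact fun s hs => ((hφ n).continuous.pow 2).mul ((hρx s (Ioo_subset_Icc_self hs)).pow 2)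
    · refine (((hφ n).continuous.comp continuous_snd).pow 2).continuousOn.mul
        ((continuousOn_const.mul (hρc.mono ?_)).mul hρt')
      exact prod_mono Ioo_subset_Icc_self subset_rfl
    · intro s hs x
      have h1 := ((hρt x s hs).hasDerivAt.pow 2).const_mul (φ n x ^ 2)
      refine h1.congr_deriv ?_
      simp
    · intro s x hx; simp [hφk n x hx]
    · intro s x hx; simp [hφk n x hx]
  have hle : ∀ n, ∀ t ∈ Ioo 0 T, ∫ x, φ n x ^ 2 * (2 * ρ t x * deriv (fun s => ρ s x) t)
      ≤ -σ * D n t + A * E n t + ε n := by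
    intro n t ht
    have ht' := Ioo_subset_Icc_self ht
    have h1 := deriv_energy_le X hXsm hXdivfree (β := b t) hσ (hρ2 t ht) (hb1 t ht') (hbM t ht') (hφ n) (hk n)
      (hφk n) (hφv n) (hρi t ht') (hpde t ht) (hder n t ht).1
    refine h1.trans ?_
    have h2 : (8 * σ + 2) * (m * c n) * (∫ x, ρ t x ^ 2) ≤ ε n :=
      mul_le_mul_of_nonneg_left (hρs t ht') (by have := hc0 n; positivity)
    exact add_le_add_right h2 _
  have hode := fun n => ode_bound hT hσ hA (hε0 n) (hEc n) (hE0 n) (hD0 n)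
    (fun t ht => (hder n t ht).2) (hDc n) (hle n)
  have hEI : ∀ n, E n 0 ≤ I := by
    intro n
    refine integral_mono_of_nonneg (Filter.Eventually.of_forall fun x => by positivity) hρ0
      (Filter.Eventually.of_forall fun x => ?_)
    simp only [hini]
    exact mul_le_of_le_one_left (sq_nonneg _) (pow_le_one₀ (hφ0 n x) (hφ1 n x))
  have hP : 0 ≤ Real.exp (A * T) * I := by positivity
  constructor
  · intro t ht
    have hlim : Filter.Tendsto (fun n => E n t) Filter.atTop (nhds (∫ x, ρ t x ^ 2)) := by
      refine tendsto_integral_of_dominated_convergence (fun x => ρ t x ^ 2) ?_ (hρi t ht) ?_ ?_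
      · exact fun n => (((hφ n).continuous.pow 2).mul ((hρx t ht).pow 2)).aestronglyMeasurable
      · refine fun n => Filter.Eventually.of_forall fun x => ?_
        rw [Real.norm_of_nonneg (by positivity)]
        exact mul_le_of_le_one_left (sq_nonneg _) (pow_le_one₀ (hφ0 n x) (hφ1 n x))
      · refine Filter.Eventually.of_forall fun x => ?_
        simpa using ((hφt x).pow 2).mul_const (ρ t x ^ 2)
    have hlim2 : Filter.Tendsto (fun n => Real.exp (A * T) * (I + ε n * T)) Filter.atTop
        (nhds (Real.exp (A * T) * I)) := by
      simpa using ((hεt.mul_const T).const_add I).const_mul (Real.exp (A * T))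
    have h1 : ∫ x, ρ t x ^ 2 ≤ Real.exp (A * T) * I := by
      refine le_of_tendsto_of_tendsto' hlim hlim2 fun n => ((hode n).1 t ht).trans ?_
      have := hEI n
      gcongr
    refine h1.trans ?_
    have : 0 ≤ (1 + A * T) * Real.exp (A * T) / σ := by positivity
    nlinarith
  · set B : ℕ → ℝ := fun n => ((1 + A * T) * (Real.exp (A * T) * (I + ε n * T)) + ε n * T) / σ with hB
    have hBt : Filter.Tendsto B Filter.atTop (nhds (((1 + A * T) * (Real.exp (A * T) * I)) / σ)) := by
      have := ((((((hεt.mul_const T).const_add I).const_mul (Real.exp (A * T))).const_mul (1 + A * T)).add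
        (hεt.mul_const T)).div_const σ)
      simpa using this
    let a : ℕ → ℝ := fun n => T / ((n:ℝ) + 3)
    have ha0 : ∀ n, 0 < a n := fun n => by positivity
    have ha3 : ∀ n, a n ≤ T / 3 := fun n => by
      apply div_le_div_of_nonneg_left hT.le (by norm_num)
      linarith [(Nat.cast_nonneg n : (0:ℝ) ≤ n)]
    have hat : Filter.Tendsto a Filter.atTop (nhds 0) := by
      apply Filter.Tendsto.const_div_atTop
      exact Filter.tendsto_atTop_add_const_right _ _ tendsto_natCast_atTop_atTop
    let u : ℕ → ℝ → ENNReal := fun n => (Icc (a n) (T - a n)).indicator (fun t => ENNReal.ofReal (D n t))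
    have hsub : ∀ n, Icc (a n) (T - a n) ⊆ Ioo 0 T := fun n s hs =>
      ⟨(ha0 n).trans_le hs.1, hs.2.trans_lt (by linarith [ha0 n])⟩
    have hum : ∀ n, AEMeasurable (u n) (volume.restrict (Ioo 0 T)) := by
      intro n
      refine AEMeasurable.mono_measure ?_ Measure.restrict_le_self
      rw [aemeasurable_indicator_iff measurableSet_Icc]
      exact (((hDc n).mono (hsub n)).aemeasurable measurableSet_Icc).ennreal_ofReal
    have hui : ∀ n, ∫⁻ t in Ioo 0 T, u n t ≤ ENNReal.ofReal (B n) := by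
      intro n
      have hab : a n ≤ T - a n := by linarith [ha3 n]
      calc ∫⁻ t in Ioo 0 T, u n t ≤ ∫⁻ t, u n t := setLIntegral_le_lintegral _ _
        _ = ∫⁻ t in Icc (a n) (T - a n), ENNReal.ofReal (D n t) := lintegral_indicator measurableSet_Icc _
        _ = ENNReal.ofReal (∫ t in Icc (a n) (T - a n), D n t) := by
            rw [ofReal_integral_eq_lintegral_ofReal]
            · exact ((hDc n).mono (hsub n)).integrableOn_Icc
            · exact Filter.Eventually.of_forall (hD0 n)
        _ ≤ ENNReal.ofReal (B n) := by
            apply ENNReal.ofReal_le_ofReal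
            rw [integral_Icc_eq_integral_Ioc, ← intervalIntegral.integral_of_le hab]
            refine ((hode n).2 _ _ (ha0 n) hab (by linarith [ha0 n])).trans ?_
            have h1 := hEI n
            have h2 := hε0 n
            simp only [hB]
            gcongr
    have hin : ∀ t ∈ Ioo 0 T, ∫⁻ x, ENNReal.ofReal (hgradSq X (ρ t) x)
        ≤ Filter.liminf (fun n => u n t) Filter.atTop := by
      intro t ht
      have e1 : ∀ x, ENNReal.ofReal (hgradSq X (ρ t) x) =
          Filter.liminf (fun n => ENNReal.ofReal (φ n x ^ 2 * hgradSq X (ρ t) x)) Filter.atTop := by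
        intro x
        symm
        apply Filter.Tendsto.liminf_eq
        apply ENNReal.tendsto_ofReal
        simpa using ((hφt x).pow 2).mul_const (hgradSq X (ρ t) x)
      have hcn : ∀ n, Continuous (fun x => φ n x ^ 2 * hgradSq X (ρ t) x) := fun n =>
        ((hφ n).continuous.pow 2).mul (hgx t ht)
      have e2 : ∀ n, ∫⁻ x, ENNReal.ofReal (φ n x ^ 2 * hgradSq X (ρ t) x) = ENNReal.ofReal (D n t) := by
        intro n
        symm
        apply ofReal_integral_eq_lintegral_ofReal
        · exact (hcn n).integrable_of_hasCompactSupport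
            (HasCompactSupport.intro (hk n) fun x hx => by simp [hφk n x hx])
        · exact Filter.Eventually.of_forall fun x => mul_nonneg (sq_nonneg _) (hg0 t x)
      calc ∫⁻ x, ENNReal.ofReal (hgradSq X (ρ t) x) = ∫⁻ x, Filter.liminf
            (fun n => ENNReal.ofReal (φ n x ^ 2 * hgradSq X (ρ t) x)) Filter.atTop := by simp only [← e1]
        _ ≤ Filter.liminf (fun n => ∫⁻ x, ENNReal.ofReal (φ n x ^ 2 * hgradSq X (ρ t) x)) Filter.atTop :=
            lintegral_liminf_le' fun n => (hcn n).aemeasurable.ennreal_ofReal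
        _ = Filter.liminf (fun n => u n t) Filter.atTop := by
            apply Filter.liminf_congr
            have h1 := hat.eventually (gt_mem_nhds ht.1)
            have h2 := hat.eventually (gt_mem_nhds (sub_pos.2 ht.2))
            filter_upwards [h1, h2] with n h1 h2
            rw [e2]
            have : t ∈ Icc (a n) (T - a n) := ⟨h1.le, by linarith⟩
            simp only [u, indicator_of_mem this]
    have hL : ∫⁻ t in Ioo 0 T, ∫⁻ x, ENNReal.ofReal (hgradSq X (ρ t) x)
        ≤ ENNReal.ofReal (((1 + A * T) * (Real.exp (A * T) * I)) / σ) := by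
      calc _ ≤ ∫⁻ t in Ioo 0 T, Filter.liminf (fun n => u n t) Filter.atTop :=
            setLIntegral_mono' measurableSet_Ioo hin
        _ ≤ Filter.liminf (fun n => ∫⁻ t in Ioo 0 T, u n t) Filter.atTop := lintegral_liminf_le' hum
        _ ≤ Filter.liminf (fun n => ENNReal.ofReal (B n)) Filter.atTop :=
            Filter.liminf_le_liminf (Filter.Eventually.of_forall hui)
        _ = _ := (ENNReal.tendsto_ofReal hBt).liminf_eq
    have hfin : (∫ t in Ioo 0 T, ∫ x, hgradSq X (ρ t) x) ≤ ((1 + A * T) * (Real.exp (A * T) * I)) / σ := by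
      have h0 : 0 ≤ ((1 + A * T) * (Real.exp (A * T) * I)) / σ := by positivity
      rw [← ENNReal.ofReal_le_ofReal_iff h0]
      refine le_trans ?_ hL
      rw [← Real.enorm_of_nonneg (integral_nonneg fun t => integral_nonneg (hg0 t))]
      refine (enorm_integral_le_lintegral_enorm _).trans (lintegral_mono fun t => ?_)
      refine (enorm_integral_le_lintegral_enorm _).trans (lintegral_mono fun x => ?_)
      rw [Real.enorm_of_nonneg (hg0 t x)]
    rw [integral_Ioc_eq_integral_Ioo]
    refine hfin.trans ?_
    have : (1 + A * T) * (Real.exp (A * T) * I) / σ = (1 + A * T) * Real.exp (A * T) / σ * I := by ring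
    rw [this]
    nlinarith
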